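/- There exists a constant c₀ > 0 such that the function u : ℝ³ → ℝ, u(x,y,t) = c₀·((1 + x² + y²)² + t²)^{−1/2}, is everywhere positive, smooth, and satisfies the CR Yamabe equation −(X²u + Y²u) = u³ at every point of ℝ³ (equivalently, 4Δ_{ℍ¹} u = u³ with Δ_{ℍ¹} = −(1/4)(X² + Y²)). -/

import Mathlib

/-!
Write `w = 1 + x² + y²` and `D = w² + t²`, so that `u = c₀ D^(-1/2)`. Then
`XD = 4(xw + yt)` and `YD = 4(yw - xt)`, whence `(XD)² + (YD)² = 16(x² + y²)D`, and
`X²D + Y²D = 8w + 16(x² + y²)`. By the chain rule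
`X²u + Y²u = c₀ (¾ D^(-5/2) ((XD)² + (YD)²) - ½ D^(-3/2) (X²D + Y²D)) = -4 c₀ D^(-3/2)`,
while `u³ = c₀³ D^(-3/2)`. The equation therefore holds exactly when `c₀² = 4`, i.e. `c₀ = 2`.
Positivity and smoothness follow from `D > 0`.
-/

/-- The Heisenberg vector field `X = ∂/∂x + 2y·∂/∂t` applied to `u`. -/
noncomputable def Xd (u : ℝ → ℝ → ℝ → ℝ) (x y t : ℝ) : ℝ :=
  deriv (fun s => u s y t) x + 2 * y * deriv (fun s => u x y s) t

/-- The Heisenberg vector field `Y = ∂/∂y − 2x·∂/∂t` applied to `u`. -/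
noncomputable def Yd (u : ℝ → ℝ → ℝ → ℝ) (x y t : ℝ) : ℝ :=
  deriv (fun s => u x s t) y - 2 * x * deriv (fun s => u x y s) t

/-- The function `D = |w + it|²` with `w = 1 + x² + y²`. -/
def bubbleBase (x y t : ℝ) : ℝ := (1 + x ^ 2 + y ^ 2) ^ 2 + t ^ 2

theorem bubbleBase_pos (x y t : ℝ) : 0 < bubbleBase x y t := by
  unfold bubbleBase
  positivity

theorem hasDerivAt_bubbleBase_x (x y t : ℝ) :
    HasDerivAt (fun s => bubbleBase s y t) (4 * x * (1 + x ^ 2 + y ^ 2)) x := by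
  unfold bubbleBase
  refine HasDerivAt.congr_deriv ((((((hasDerivAt_id x).pow 2).const_add 1).add_const (y ^ 2)).pow 2).add_const (t ^ 2)) ?_
  simp
  ring

theorem hasDerivAt_bubbleBase_y (x y t : ℝ) :
    HasDerivAt (fun s => bubbleBase x s t) (4 * y * (1 + x ^ 2 + y ^ 2)) y := by
  unfold bubbleBase
  refine HasDerivAt.congr_deriv (((((hasDerivAt_id y).pow 2).const_add (1 + x ^ 2)).pow 2).add_const (t ^ 2)) ?_
  simp
  ring

theorem hasDerivAt_bubbleBase_t (x y t : ℝ) :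
    HasDerivAt (fun s => bubbleBase x y s) (2 * t) t := by
  unfold bubbleBase
  refine HasDerivAt.congr_deriv (((hasDerivAt_id t).pow 2).const_add ((1 + x ^ 2 + y ^ 2) ^ 2)) ?_
  simp

theorem deriv_mul_rpow {P Q : ℝ → ℝ} {p q s : ℝ} (a : ℝ) (hP : HasDerivAt P p s)
    (hQ : HasDerivAt Q q s) (h : 0 < Q s) :
    deriv (fun r => P r * Q r ^ a) s = p * Q s ^ a + P s * (q * a * Q s ^ (a - 1)) :=
  (hP.mul (hQ.rpow_const (Or.inl h.ne'))).deriv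

/-- The product and chain rules for `X` applied to `P · D ^ a`. -/
theorem Xd_mul_bubbleBase_rpow {P : ℝ → ℝ → ℝ → ℝ} {x y t px pt : ℝ} (a : ℝ)
    (hx : HasDerivAt (fun s => P s y t) px x) (ht : HasDerivAt (fun s => P x y s) pt t) :
    Xd (fun x y t => P x y t * bubbleBase x y t ^ a) x y t =
      (px + 2 * y * pt) * bubbleBase x y t ^ a +
      P x y t * (a * (4 * (x * (1 + x ^ 2 + y ^ 2) + y * t)) * bubbleBase x y t ^ (a - 1)) := by
  unfold Xd
  rw [deriv_mul_rpow a hx (hasDerivAt_bubbleBase_x x y t) (bubbleBase_pos x y t),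
    deriv_mul_rpow a ht (hasDerivAt_bubbleBase_t x y t) (bubbleBase_pos x y t)]
  ring

/-- The product and chain rules for `Y` applied to `P · D ^ a`. -/
theorem Yd_mul_bubbleBase_rpow {P : ℝ → ℝ → ℝ → ℝ} {x y t py pt : ℝ} (a : ℝ)
    (hy : HasDerivAt (fun s => P x s t) py y) (ht : HasDerivAt (fun s => P x y s) pt t) :
    Yd (fun x y t => P x y t * bubbleBase x y t ^ a) x y t =
      (py - 2 * x * pt) * bubbleBase x y t ^ a +
      P x y t * (a * (4 * (y * (1 + x ^ 2 + y ^ 2) - x * t)) * bubbleBase x y t ^ (a - 1)) := by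
  unfold Yd
  rw [deriv_mul_rpow a hy (hasDerivAt_bubbleBase_y x y t) (bubbleBase_pos x y t),
    deriv_mul_rpow a ht (hasDerivAt_bubbleBase_t x y t) (bubbleBase_pos x y t)]
  ring

theorem Xd_bubble :
    Xd (fun x y t => 2 * bubbleBase x y t ^ (-(1 : ℝ) / 2)) = fun x y t =>
      (-4 * (x * (1 + x ^ 2 + y ^ 2) + y * t)) * bubbleBase x y t ^ (-(3 : ℝ) / 2) := by
  funext x y t
  rw [Xd_mul_bubbleBase_rpow (P := fun _ _ _ => 2) _ (hasDerivAt_const x 2)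
    (hasDerivAt_const t 2), show (-(1 : ℝ) / 2 - 1) = -3 / 2 by norm_num]
  ring

theorem Yd_bubble :
    Yd (fun x y t => 2 * bubbleBase x y t ^ (-(1 : ℝ) / 2)) = fun x y t =>
      (-4 * (y * (1 + x ^ 2 + y ^ 2) - x * t)) * bubbleBase x y t ^ (-(3 : ℝ) / 2) := by
  funext x y t
  rw [Yd_mul_bubbleBase_rpow (P := fun _ _ _ => 2) _ (hasDerivAt_const y 2)
    (hasDerivAt_const t 2), show (-(1 : ℝ) / 2 - 1) = -3 / 2 by norm_num]
  ring

theorem XX_add_YY_bubble (x y t : ℝ) :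
    Xd (Xd (fun x y t => 2 * bubbleBase x y t ^ (-(1 : ℝ) / 2))) x y t +
      Yd (Yd (fun x y t => 2 * bubbleBase x y t ^ (-(1 : ℝ) / 2))) x y t =
      -8 * bubbleBase x y t ^ (-(3 : ℝ) / 2) := by
  have hXx : HasDerivAt (fun s => -4 * (s * (1 + s ^ 2 + y ^ 2) + y * t))
      (-4 * (1 + 3 * x ^ 2 + y ^ 2)) x := by
    refine HasDerivAt.congr_deriv ((((hasDerivAt_id x).mul ((((hasDerivAt_id x).pow 2).const_add 1).add_const
      (y ^ 2))).add_const (y * t)).const_mul (-4)) ?_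
    simp
    ring
  have hXt : HasDerivAt (fun s => -4 * (x * (1 + x ^ 2 + y ^ 2) + y * s)) (-4 * y) t := by
    refine HasDerivAt.congr_deriv ((((hasDerivAt_id t).const_mul y).const_add
      (x * (1 + x ^ 2 + y ^ 2))).const_mul (-4)) ?_
    simp
  have hYy : HasDerivAt (fun s => -4 * (s * (1 + x ^ 2 + s ^ 2) - x * t))
      (-4 * (1 + x ^ 2 + 3 * y ^ 2)) y := by
    refine HasDerivAt.congr_deriv ((((hasDerivAt_id y).mul (((hasDerivAt_id y).pow 2).const_add
      (1 + x ^ 2))).sub_const (x * t)).const_mul (-4)) ?_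
    simp
    ring
  have hYt : HasDerivAt (fun s => -4 * (y * (1 + x ^ 2 + y ^ 2) - x * s)) (4 * x) t := by
    refine HasDerivAt.congr_deriv ((((hasDerivAt_id t).const_mul x).const_sub
      (y * (1 + x ^ 2 + y ^ 2))).const_mul (-4)) ?_
    simp
  rw [Xd_bubble, Yd_bubble,
    Xd_mul_bubbleBase_rpow (P := fun x y t => -4 * (x * (1 + x ^ 2 + y ^ 2) + y * t)) _ hXx hXt,
    Yd_mul_bubbleBase_rpow (P := fun x y t => -4 * (y * (1 + x ^ 2 + y ^ 2) - x * t)) _ hYy hYt]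
  -- All terms become polynomial multiples of `D ^ (-3/2 - 1)`.
  have hD : bubbleBase x y t ^ (-(3 : ℝ) / 2) =
      bubbleBase x y t ^ (-(3 : ℝ) / 2 - 1) * bubbleBase x y t := by
    rw [← Real.rpow_add_one (bubbleBase_pos x y t).ne', sub_add_cancel]
  rw [hD]
  generalize bubbleBase x y t ^ (-(3 : ℝ) / 2 - 1) = E
  unfold bubbleBase
  ring

/-- There is a constant `c₀ > 0` such that
`u(x,y,t) = c₀·((1 + x² + y²)² + t²)^{−1/2}` is positive, smooth, and solves
the CR Yamabe equation `−(X²u + Y²u) = u³` on ℝ³. -/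
theorem standard_bubble_solves_CR_Yamabe :
    ∃ c₀ : ℝ, 0 < c₀ ∧
      ∀ u : ℝ → ℝ → ℝ → ℝ,
        (u = fun x y t => c₀ * ((1 + x ^ 2 + y ^ 2) ^ 2 + t ^ 2) ^ (-(1 : ℝ) / 2)) →
        (∀ x y t : ℝ, 0 < u x y t) ∧
        ContDiff ℝ (⊤ : ℕ∞) (fun p : ℝ × ℝ × ℝ => u p.1 p.2.1 p.2.2) ∧
        (∀ x y t : ℝ, -(Xd (Xd u) x y t + Yd (Yd u) x y t) = (u x y t) ^ 3) := by
  refine ⟨2, two_pos, ?_⟩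
  rintro u rfl
  refine ⟨fun x y t => mul_pos two_pos (Real.rpow_pos_of_pos (bubbleBase_pos x y t) _), ?_,
    fun x y t => ?_⟩
  · refine contDiff_const.mul (ContDiff.rpow_const_of_ne ?_ fun p =>
      (bubbleBase_pos p.1 p.2.1 p.2.2).ne')
    fun_prop
  · have hcube : (bubbleBase x y t ^ (-(1 : ℝ) / 2)) ^ 3 =
        bubbleBase x y t ^ (-(3 : ℝ) / 2) := by
      rw [← Real.rpow_mul_natCast (bubbleBase_pos x y t).le]
      norm_num
    have h := XX_add_YY_bubble x y t
    change -(Xd (Xd (fun x y t => 2 * bubbleBase x y t ^ (-(1 : ℝ) / 2))) x y t +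
      Yd (Yd (fun x y t => 2 * bubbleBase x y t ^ (-(1 : ℝ) / 2))) x y t) =
      (2 * bubbleBase x y t ^ (-(1 : ℝ) / 2)) ^ 3
    rw [h, mul_pow, hcube]
    ring
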